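/- Let γ ∈ [0,2), d := 2(γ+1)/(2−γ), and let b be the γ-anti-tree over (X, m) with counting measure m ≡ 1 and intrinsic degree path metric ρ. Then there exists C_D > 0 such that for every x ∈ X and all radii r₁, r₂ with max(1, ρ(x,o)) ≤ r₁ ≤ r₂: #B_x(r₂) ≤ C_D · (r₂/r₁)^d · #B_x(r₁). -/

import Mathlib

open scoped BigOperators

/-- Vertex set of the anti-tree with sphere function `s`:
the `k`-th sphere has `s k` elements. -/
def AntiTree (s : ℕ → ℕ) : Type := Σ k : ℕ, Fin (s k)

namespace AntiTree

/-- Standard edge weights of the anti-tree: consecutive spheres are completely connected,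
and there are no other edges. -/
def wt (s : ℕ → ℕ) (x y : AntiTree s) : ℝ :=
  if x.1 + 1 = y.1 ∨ y.1 + 1 = x.1 then 1 else 0

/-- Weighted vertex degree with respect to the counting measure `m ≡ 1`. -/
noncomputable def Deg (s : ℕ → ℕ) (x : AntiTree s) : ℝ := ∑' y : AntiTree s, wt s x y

end AntiTree

/-- Intrinsic degree path (pseudo-)metric of a weighted graph `b` whose weighted degree
function is `D`:  `ρ(x,y)` is the infimum over finite paths from `x` to `y` of
`∑_j min(1/D(x_j), 1/D(x_{j+1}))^{1/2}`. -/
noncomputable def pathMetric {X : Type*} (b : X → X → ℝ) (D : X → ℝ) (x y : X) : ℝ :=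
  sInf { L : ℝ | ∃ (k : ℕ) (p : ℕ → X), p 0 = x ∧ p k = y ∧
    (∀ j < k, 0 < b (p j) (p (j + 1))) ∧
    L = ∑ j ∈ Finset.range k, Real.sqrt (min (1 / D (p j)) (1 / D (p (j + 1)))) }

/-- The intrinsic degree path metric of the anti-tree. -/
noncomputable def AntiTree.rho (s : ℕ → ℕ) : AntiTree s → AntiTree s → ℝ :=
  pathMetric (AntiTree.wt s) (AntiTree.Deg s)

/-- Closed balls with respect to the intrinsic degree path metric. -/
noncomputable def AntiTree.ball (s : ℕ → ℕ) (x : AntiTree s) (r : ℝ) : Set (AntiTree s) :=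
  {y | AntiTree.rho s x y ≤ r}

/-- The sphere function of the `γ`-anti-tree: `s (k-1) = ⌊k ^ γ⌋` for `k ≥ 1`,
i.e. `s k = ⌊(k+1) ^ γ⌋`. -/
noncomputable def gammaSphere (γ : ℝ) : ℕ → ℕ := fun k => ⌊((k : ℝ) + 1) ^ γ⌋₊

/-! In an anti-tree `ρ(x, y)` is the difference of the radial coordinates of `x` and `y` as soon as
these lie on different spheres. Hence a ball `B_x(r)` with `r ≥ ρ(x, o)` contains every sphere of
radial coordinate at most `r`, except possibly that of `x`, and is contained in the union of the
spheres of radial coordinate at most `2r`. If `s k` is comparable to `k ^ γ`, edges at height `k`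
have length of order `k ^ (-γ / 2)`, so the `n`-th sphere has radial coordinate of order
`n ^ (1 - γ / 2)`, while the first `n` spheres have of order `n ^ (γ + 1)` vertices. Together this
gives `#B_x(r) ≍ r ^ d` with `d = (γ + 1) / (1 - γ / 2)`, which implies doubling. -/

section PathMetric

variable {X : Type*} {b : X → X → ℝ} {D : X → ℝ} {x y z : X} {L : ℝ}

/-- The set of lengths of the finite paths from `x` to `y`; its infimum is `pathMetric b D x y`. -/
def pathLengths (b : X → X → ℝ) (D : X → ℝ) (x y : X) : Set ℝ :=
  { L : ℝ | ∃ (k : ℕ) (p : ℕ → X), p 0 = x ∧ p k = y ∧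
    (∀ j < k, 0 < b (p j) (p (j + 1))) ∧
    L = ∑ j ∈ Finset.range k, Real.sqrt (min (1 / D (p j)) (1 / D (p (j + 1)))) }

theorem nonneg_of_mem_pathLengths (hL : L ∈ pathLengths b D x y) : 0 ≤ L := by
  obtain ⟨k, p, -, -, -, rfl⟩ := hL
  positivity

theorem zero_mem_pathLengths_self (b : X → X → ℝ) (D : X → ℝ) (x : X) :
    0 ∈ pathLengths b D x x :=
  ⟨0, fun _ => x, rfl, rfl, by simp, by simp⟩

theorem add_mem_pathLengths (hxy : 0 < b x y) (hL : L ∈ pathLengths b D y z) :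
    L + Real.sqrt (min (1 / D x) (1 / D y)) ∈ pathLengths b D x z := by
  obtain ⟨k, p, rfl, rfl, hp, rfl⟩ := hL
  refine ⟨k + 1, fun j => j.casesOn x p, rfl, rfl, ?_, ?_⟩
  · rintro (_ | j) hj
    · exact hxy
    · exact hp j (by omega)
  · rw [Finset.sum_range_succ']
    rfl

theorem pathLengths_subset_swap (hb : ∀ x y, b x y = b y x) (x y : X) :
    pathLengths b D x y ⊆ pathLengths b D y x := by
  rintro _ ⟨k, p, rfl, rfl, hp, rfl⟩
  refine ⟨k, fun j => p (k - j), by simp, by simp, fun j hj => ?_, ?_⟩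
  · have hstep := hp (k - (j + 1)) (by omega)
    rwa [hb, show k - (j + 1) + 1 = k - j by omega] at hstep
  · rw [← Finset.sum_range_reflect]
    refine Finset.sum_congr rfl fun j hj => ?_
    have hj : j < k := Finset.mem_range.1 hj
    rw [show k - 1 - j + 1 = k - j by omega, show k - 1 - j = k - (j + 1) by omega, min_comm]

theorem pathMetric_comm (hb : ∀ x y, b x y = b y x) (x y : X) :
    pathMetric b D x y = pathMetric b D y x :=
  congrArg sInf
    ((pathLengths_subset_swap hb x y).antisymm (pathLengths_subset_swap hb y x))

theorem pathMetric_nonneg (b : X → X → ℝ) (D : X → ℝ) (x y : X) : 0 ≤ pathMetric b D x y :=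
  Real.sInf_nonneg fun _ => nonneg_of_mem_pathLengths

theorem pathMetric_le_of_mem (hL : L ∈ pathLengths b D x y) : pathMetric b D x y ≤ L :=
  csInf_le ⟨0, fun _ => nonneg_of_mem_pathLengths⟩ hL

theorem pathMetric_self (b : X → X → ℝ) (D : X → ℝ) (x : X) : pathMetric b D x x = 0 :=
  (pathMetric_le_of_mem (zero_mem_pathLengths_self b D x)).antisymm (pathMetric_nonneg b D x x)

theorem abs_sub_le_of_mem_pathLengths {f : X → ℝ}
    (hf : ∀ x y, 0 < b x y → |f x - f y| ≤ Real.sqrt (min (1 / D x) (1 / D y)))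
    (hL : L ∈ pathLengths b D x y) : |f x - f y| ≤ L := by
  obtain ⟨k, p, rfl, rfl, hp, rfl⟩ := hL
  simp only [← Real.dist_eq] at hf ⊢
  exact dist_le_range_sum_of_dist_le (f := fun j => f (p j)) k fun hj => hf _ _ (hp _ hj)

end PathMetric

namespace AntiTree

variable {s : ℕ → ℕ} {x y o : AntiTree s} {r : ℝ}

/-- The union of the spheres with index in `A`. -/
def spheres (s : ℕ → ℕ) (A : Finset ℕ) : Finset (AntiTree s) :=
  A.sigma fun k => (Finset.univ : Finset (Fin (s k)))

theorem mem_spheres {A : Finset ℕ} : x ∈ spheres s A ↔ x.1 ∈ A :=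
  Finset.mem_sigma.trans (and_iff_left (Finset.mem_univ _))

theorem card_spheres (s : ℕ → ℕ) (A : Finset ℕ) : (spheres s A).card = ∑ k ∈ A, s k :=
  (Finset.card_sigma _ _).trans (by simp)

/-- The common degree of the vertices of the `k`-th sphere, see `Deg_eq_levelDeg`. -/
def levelDeg (s : ℕ → ℕ) (k : ℕ) : ℝ := (if k = 0 then 0 else (s (k - 1) : ℝ)) + s (k + 1)

/-- The intrinsic length of any edge between the `k`-th and the `(k+1)`-st sphere. -/
noncomputable def edgeLength (s : ℕ → ℕ) (k : ℕ) : ℝ :=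
  Real.sqrt (min (1 / levelDeg s k) (1 / levelDeg s (k + 1)))

/-- The radial coordinate of the `n`-th sphere: the intrinsic length of a monotone path from the
root to that sphere. -/
noncomputable def radius (s : ℕ → ℕ) (n : ℕ) : ℝ := ∑ k ∈ Finset.range n, edgeLength s k

theorem Deg_eq_sum_ite (x : AntiTree s) :
    Deg s x =
      ∑ j ∈ Finset.range (x.1 + 2), if x.1 + 1 = j ∨ j + 1 = x.1 then (s j : ℝ) else 0 := by
  have hDeg : Deg s x = ∑ y ∈ spheres s (Finset.range (x.1 + 2)), wt s x y := by
    refine tsum_eq_sum fun y hy => if_neg ?_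
    rw [mem_spheres, Finset.mem_range] at hy
    omega
  rw [hDeg]
  refine (Finset.sum_sigma _ _ _).trans (Finset.sum_congr rfl fun j _ => ?_)
  split_ifs with h <;> simp [wt, h]

theorem Deg_eq_levelDeg (x : AntiTree s) : Deg s x = levelDeg s x.1 := by
  rw [Deg_eq_sum_ite, levelDeg]
  cases x.1 with
  | zero => simp
  | succ k =>
    rw [Finset.sum_range_succ, Finset.sum_range_succ, Finset.sum_range_succ, Finset.sum_eq_zero]
    · simp
    · intro j hj
      rw [Finset.mem_range] at hj
      exact if_neg (by omega)

theorem edgeLength_nonneg (s : ℕ → ℕ) (k : ℕ) : 0 ≤ edgeLength s k := Real.sqrt_nonneg _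

theorem radius_nonneg (s : ℕ → ℕ) (n : ℕ) : 0 ≤ radius s n :=
  Finset.sum_nonneg fun k _ => edgeLength_nonneg s k

theorem radius_zero (s : ℕ → ℕ) : radius s 0 = 0 := Finset.sum_range_zero _

theorem radius_succ (s : ℕ → ℕ) (n : ℕ) : radius s (n + 1) = radius s n + edgeLength s n :=
  Finset.sum_range_succ _ _

theorem radius_mono (s : ℕ → ℕ) : Monotone (radius s) :=
  monotone_nat_of_le_succ fun n => by
    rw [radius_succ]
    exact le_add_of_nonneg_right (edgeLength_nonneg s n)

theorem wt_comm (x y : AntiTree s) : wt s x y = wt s y x := by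
  simp only [wt, or_comm]

theorem wt_pos_iff : 0 < wt s x y ↔ x.1 + 1 = y.1 ∨ y.1 + 1 = x.1 := by
  unfold wt
  split_ifs with h <;> simp [h]

theorem sqrt_min_one_div_Deg (h : x.1 + 1 = y.1) :
    Real.sqrt (min (1 / Deg s x) (1 / Deg s y)) = edgeLength s x.1 := by
  rw [Deg_eq_levelDeg, Deg_eq_levelDeg, ← h, edgeLength]

theorem abs_radius_sub_le_of_wt_pos (h : 0 < wt s x y) :
    |radius s x.1 - radius s y.1| ≤ Real.sqrt (min (1 / Deg s x) (1 / Deg s y)) := by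
  rcases wt_pos_iff.1 h with h | h
  · rw [sqrt_min_one_div_Deg h, ← h, radius_succ, sub_add_cancel_left, abs_neg,
      abs_of_nonneg (edgeLength_nonneg s _)]
  · rw [min_comm, sqrt_min_one_div_Deg h, ← h, radius_succ, add_sub_cancel_left,
      abs_of_nonneg (edgeLength_nonneg s _)]

theorem radius_sub_mem_pathLengths (hs : ∀ k, 0 < s k) {n : ℕ} (h : y.1 = x.1 + n + 1) :
    radius s y.1 - radius s x.1 ∈ pathLengths (wt s) (Deg s) x y := by
  induction n generalizing x with
  | zero =>
    have hxy : x.1 + 1 = y.1 := h.symm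
    have hmem := add_mem_pathLengths (wt_pos_iff.2 (.inl hxy))
      (zero_mem_pathLengths_self (wt s) (Deg s) y)
    rwa [sqrt_min_one_div_Deg hxy, ← add_sub_cancel_left (radius s x.1) (edgeLength s x.1),
      ← radius_succ, hxy, zero_add] at hmem
  | succ n ih =>
    let z : AntiTree s := ⟨x.1 + 1, 0, hs _⟩
    have hmem := add_mem_pathLengths (wt_pos_iff.2 (.inl rfl)) (ih (x := z) (by grind))
    rwa [sqrt_min_one_div_Deg (y := z) rfl, show radius s z.1 = _ from radius_succ s x.1,
      sub_add_eq_sub_sub, sub_add_cancel] at hmem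

theorem rho_nonneg (x y : AntiTree s) : 0 ≤ rho s x y := pathMetric_nonneg _ _ x y

theorem rho_eq_abs_radius_sub (hs : ∀ k, 0 < s k) (hxy : x.1 ≠ y.1) :
    rho s x y = |radius s x.1 - radius s y.1| := by
  wlog hlt : x.1 < y.1 generalizing x y
  · rw [abs_sub_comm, ← this hxy.symm (by omega)]
    exact pathMetric_comm wt_comm x y
  obtain ⟨n, hn⟩ := Nat.exists_eq_add_of_lt hlt
  have hmem := radius_sub_mem_pathLengths hs hn
  rw [← abs_of_nonneg (nonneg_of_mem_pathLengths hmem), abs_sub_comm] at hmem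
  exact (pathMetric_le_of_mem hmem).antisymm (le_csInf ⟨_, hmem⟩ fun _ hL =>
    abs_sub_le_of_mem_pathLengths (f := fun z => radius s z.1)
      (fun _ _ => abs_radius_sub_le_of_wt_pos) hL)

theorem abs_radius_sub_le_rho (hs : ∀ k, 0 < s k) (x y : AntiTree s) :
    |radius s x.1 - radius s y.1| ≤ rho s x y := by
  by_cases h : x.1 = y.1
  · simpa [h] using rho_nonneg x y
  · exact (rho_eq_abs_radius_sub hs h).ge

theorem radius_le_rho (hs : ∀ k, 0 < s k) (ho : o.1 = 0) (x : AntiTree s) :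
    radius s x.1 ≤ rho s x o := by
  simpa [ho, radius_zero, abs_of_nonneg (radius_nonneg s _)] using abs_radius_sub_le_rho hs x o

theorem self_mem_ball (hr : 0 ≤ r) : x ∈ ball s x r :=
  (pathMetric_self (wt s) (Deg s) x).trans_le hr

theorem mem_ball_of_radius_le (hs : ∀ k, 0 < s k) (hxy : x.1 ≠ y.1) (hx : radius s x.1 ≤ r)
    (hy : radius s y.1 ≤ r) : y ∈ ball s x r := by
  have hx0 := radius_nonneg s x.1
  have hy0 := radius_nonneg s y.1
  exact (rho_eq_abs_radius_sub hs hxy).trans_le (abs_le.2 ⟨by linarith, by linarith⟩)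

theorem radius_le_of_mem_ball (hs : ∀ k, 0 < s k) (hy : y ∈ ball s x r) :
    radius s y.1 ≤ radius s x.1 + r := by
  have h := (abs_le.1 ((abs_radius_sub_le_rho hs x y).trans hy)).1
  linarith

theorem spheres_erase_subset_ball (hs : ∀ k, 0 < s k) (hx : radius s x.1 ≤ r) {m : ℕ}
    (hm : radius s m ≤ r) :
    (spheres s ((Finset.range (m + 1)).erase x.1) : Set (AntiTree s)) ⊆ ball s x r := by
  intro y hy
  obtain ⟨hne, hym⟩ := Finset.mem_erase.1 (mem_spheres.1 hy)
  exact mem_ball_of_radius_le hs hne.symm hx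
    ((radius_mono s (Finset.mem_range_succ_iff.1 hym)).trans hm)

section BallGrowth

variable {α β c C c' C' : ℝ}

theorem ball_subset_spheres (hs : ∀ k, 0 < s k) (hβ : 0 < β) (hc : 0 < c)
    (hR : ∀ n : ℕ, c * (n : ℝ) ^ β ≤ radius s n) (x : AntiTree s) (r : ℝ) :
    ball s x r ⊆
      spheres s (Finset.range (⌊((radius s x.1 + r) / c) ^ β⁻¹⌋₊ + 1)) := by
  intro y hy
  have hpow : (y.1 : ℝ) ^ β ≤ (radius s x.1 + r) / c :=
    (le_div_iff₀' hc).2 ((hR y.1).trans (radius_le_of_mem_ball hs hy))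
  rw [Finset.mem_coe, mem_spheres, Finset.mem_range_succ_iff]
  exact Nat.le_floor
    ((Real.le_rpow_inv_iff_of_pos (by positivity) (le_trans (by positivity) hpow) hβ).2 hpow)

theorem finite_ball (hs : ∀ k, 0 < s k) (hβ : 0 < β) (hc : 0 < c)
    (hR : ∀ n : ℕ, c * (n : ℝ) ^ β ≤ radius s n) (x : AntiTree s) (r : ℝ) : (ball s x r).Finite :=
  (Finset.finite_toSet _).subset (ball_subset_spheres hs hβ hc hR x r)

theorem ncard_ball_le_rpow (hs : ∀ k, 0 < s k) (hα : 0 ≤ α) (hβ : 0 < β) (hc : 0 < c) (hC : 0 ≤ C)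
    (hR : ∀ n : ℕ, c * (n : ℝ) ^ β ≤ radius s n)
    (hV : ∀ n : ℕ, ∑ k ∈ Finset.range n, (s k : ℝ) ≤ C * (n : ℝ) ^ α)
    (hr : 1 ≤ r) (hx : radius s x.1 ≤ r) :
    ((ball s x r).ncard : ℝ) ≤ C * ((2 / c) ^ β⁻¹ + 1) ^ α * r ^ (α / β) := by
  set N := ⌊((radius s x.1 + r) / c) ^ β⁻¹⌋₊
  have hx0 := radius_nonneg s x.1
  have hcard : (ball s x r).ncard ≤ ∑ k ∈ Finset.range (N + 1), s k := by
    rw [← card_spheres, ← Set.ncard_coe_finset]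
    exact Set.ncard_le_ncard (ball_subset_spheres hs hβ hc hR x r) (Finset.finite_toSet _)
  have hN : ((N + 1 : ℕ) : ℝ) ≤ ((2 / c) ^ β⁻¹ + 1) * r ^ β⁻¹ :=
    calc ((N + 1 : ℕ) : ℝ) ≤ ((radius s x.1 + r) / c) ^ β⁻¹ + 1 := by
          push_cast
          gcongr
          exact Nat.floor_le (by positivity)
      _ ≤ (2 / c * r) ^ β⁻¹ + r ^ β⁻¹ := by
          rw [div_mul_eq_mul_div, two_mul]
          gcongr
          exact Real.one_le_rpow hr (by positivity)
      _ = ((2 / c) ^ β⁻¹ + 1) * r ^ β⁻¹ := by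
          rw [Real.mul_rpow (by positivity) (by positivity), add_one_mul]
  calc ((ball s x r).ncard : ℝ) ≤ ∑ k ∈ Finset.range (N + 1), (s k : ℝ) := mod_cast hcard
    _ ≤ C * ((N + 1 : ℕ) : ℝ) ^ α := hV _
    _ ≤ C * (((2 / c) ^ β⁻¹ + 1) * r ^ β⁻¹) ^ α := by gcongr
    _ = C * ((2 / c) ^ β⁻¹ + 1) ^ α * r ^ (α / β) := by
        rw [Real.mul_rpow (by positivity) (by positivity), ← Real.rpow_mul (by positivity),
          inv_mul_eq_div, mul_assoc]

theorem rpow_le_ncard_ball (hs : ∀ k, 0 < s k) (hα : 0 ≤ α) (hβ : 0 < β) (hc : 0 ≤ c) (hC : 0 < C)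
    (hR : ∀ n : ℕ, radius s n ≤ C * (n : ℝ) ^ β)
    (hV : ∀ n m : ℕ, c * (m : ℝ) ^ α ≤ ∑ k ∈ (Finset.range (m + 1)).erase n, (s k : ℝ))
    (hx : radius s x.1 ≤ r) (hfin : (ball s x r).Finite) :
    min 1 (c / 2 ^ α) * (r / C) ^ (α / β) ≤ (ball s x r).ncard := by
  have hr : 0 ≤ r := (radius_nonneg s _).trans hx
  set M := (r / C) ^ β⁻¹ with hM
  have hMα : (r / C) ^ (α / β) = M ^ α := by
    rw [← Real.rpow_mul (by positivity), inv_mul_eq_div]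
  rw [hMα]
  rcases lt_or_ge M 1 with hM1 | hM1
  · have hone : 1 ≤ (ball s x r).ncard := (Set.ncard_pos hfin).2 ⟨x, self_mem_ball hr⟩
    calc min 1 (c / 2 ^ α) * M ^ α ≤ 1 * 1 := by
          gcongr
          · exact min_le_left _ _
          · exact Real.rpow_le_one (by positivity) hM1.le hα
      _ ≤ ((ball s x r).ncard : ℝ) := by exact_mod_cast hone
  · have hfloor : radius s ⌊M⌋₊ ≤ r :=
      calc radius s ⌊M⌋₊ ≤ C * (⌊M⌋₊ : ℝ) ^ β := hR _
        _ ≤ C * M ^ β := by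
            gcongr
            exact Nat.floor_le (by positivity)
        _ = r := by rw [hM, Real.rpow_inv_rpow (by positivity) hβ.ne', mul_div_cancel₀ _ hC.ne']
    have hhalf : M / 2 ≤ ⌊M⌋₊ := by
      have h1 : (1 : ℝ) ≤ ⌊M⌋₊ := by exact_mod_cast Nat.floor_pos.2 hM1
      linarith [Nat.lt_floor_add_one M]
    have hcard := Set.ncard_le_ncard (spheres_erase_subset_ball hs hx hfloor) hfin
    rw [Set.ncard_coe_finset, card_spheres] at hcard
    calc min 1 (c / 2 ^ α) * M ^ α ≤ c / 2 ^ α * M ^ α := by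
          gcongr
          exact min_le_right _ _
      _ = c * (M / 2) ^ α := by
          rw [Real.div_rpow (by positivity) zero_le_two, mul_div_assoc', div_mul_eq_mul_div]
      _ ≤ c * (⌊M⌋₊ : ℝ) ^ α := by gcongr
      _ ≤ ∑ k ∈ (Finset.range (⌊M⌋₊ + 1)).erase x.1, (s k : ℝ) := hV _ _
      _ ≤ (ball s x r).ncard := mod_cast hcard

theorem exists_volume_doubling (hs : ∀ k, 0 < s k) (hα : 0 ≤ α) (hβ : 0 < β) (hc : 0 < c)
    (hC : 0 < C) (hc' : 0 < c') (hC' : 0 < C')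
    (hcR : ∀ n : ℕ, c * (n : ℝ) ^ β ≤ radius s n) (hRC : ∀ n : ℕ, radius s n ≤ C * (n : ℝ) ^ β)
    (hcV : ∀ n m : ℕ, c' * (m : ℝ) ^ α ≤ ∑ k ∈ (Finset.range (m + 1)).erase n, (s k : ℝ))
    (hVC : ∀ n : ℕ, ∑ k ∈ Finset.range n, (s k : ℝ) ≤ C' * (n : ℝ) ^ α) :
    ∃ K : ℝ, 0 < K ∧ ∀ (x : AntiTree s) (r₁ r₂ : ℝ), 1 ≤ r₁ → radius s x.1 ≤ r₁ → r₁ ≤ r₂ →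
      ((ball s x r₂).ncard : ℝ) ≤ K * (r₂ / r₁) ^ (α / β) * ((ball s x r₁).ncard : ℝ) := by
  set A := C' * ((2 / c) ^ β⁻¹ + 1) ^ α
  set B := min 1 (c' / 2 ^ α)
  have hA : 0 < A := by positivity
  have hB : 0 < B := by positivity
  refine ⟨A * C ^ (α / β) / B, by positivity, fun x r₁ r₂ hr₁ hx hr₁₂ => ?_⟩
  have hupper : ((ball s x r₂).ncard : ℝ) ≤ A * r₂ ^ (α / β) :=
    ncard_ball_le_rpow hs hα hβ hc hC'.le hcR hVC (hr₁.trans hr₁₂) (hx.trans hr₁₂)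
  have hlower : B * (r₁ / C) ^ (α / β) ≤ (ball s x r₁).ncard :=
    rpow_le_ncard_ball hs hα hβ hc'.le hC hRC hcV hx (finite_ball hs hβ hc hcR x r₁)
  have hr₁0 : 0 < r₁ := by linarith
  have hr₂0 : 0 < r₂ := by linarith
  calc ((ball s x r₂).ncard : ℝ) ≤ A * r₂ ^ (α / β) := hupper
    _ = A * C ^ (α / β) / B * (r₂ / r₁) ^ (α / β) * (B * (r₁ / C) ^ (α / β)) := by
        rw [Real.div_rpow hr₂0.le hr₁0.le, Real.div_rpow hr₁0.le hC.le]
        field_simp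
    _ ≤ A * C ^ (α / β) / B * (r₂ / r₁) ^ (α / β) * ((ball s x r₁).ncard : ℝ) := by gcongr

end BallGrowth

end AntiTree

section SumRpow

variable {p : ℝ}

theorem tangent_mul_add_one_rpow (p : ℝ) {x : ℝ} (hx : 0 ≤ x) :
    (1 + (p + 1) * (x / (x + 1) - 1)) * (x + 1) ^ (p + 1) =
      (x + 1) ^ (p + 1) - (p + 1) * (x + 1) ^ p := by
  have hx1 : x + 1 ≠ 0 := by positivity
  rw [Real.rpow_add_one hx1]
  field_simp
  ring

theorem add_one_rpow_sub_rpow_le (hp : 0 ≤ p) {x : ℝ} (hx : 0 ≤ x) :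
    (x + 1) ^ (p + 1) - x ^ (p + 1) ≤ (p + 1) * (x + 1) ^ p := by
  have hbernoulli := one_add_mul_self_le_rpow_one_add (s := x / (x + 1) - 1) (p := p + 1)
    (by linarith [show 0 ≤ x / (x + 1) by positivity]) (by linarith)
  rw [add_sub_cancel, Real.div_rpow hx (by positivity), le_div_iff₀ (by positivity),
    tangent_mul_add_one_rpow p hx] at hbernoulli
  linarith

theorem le_add_one_rpow_sub_rpow (hp : -1 ≤ p) (hp0 : p ≤ 0) {x : ℝ} (hx : 0 ≤ x) :
    (p + 1) * (x + 1) ^ p ≤ (x + 1) ^ (p + 1) - x ^ (p + 1) := by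
  have hbernoulli := rpow_one_add_le_one_add_mul_self (s := x / (x + 1) - 1) (p := p + 1)
    (by linarith [show 0 ≤ x / (x + 1) by positivity]) (by linarith) (by linarith)
  rw [add_sub_cancel, Real.div_rpow hx (by positivity), div_le_iff₀ (by positivity),
    tangent_mul_add_one_rpow p hx] at hbernoulli
  linarith

theorem sum_range_add_one_rpow_le (hp : 0 ≤ p) (n : ℕ) :
    ∑ k ∈ Finset.range n, ((k : ℝ) + 1) ^ p ≤ (n : ℝ) ^ (p + 1) := by
  calc ∑ k ∈ Finset.range n, ((k : ℝ) + 1) ^ p ≤ ∑ _k ∈ Finset.range n, (n : ℝ) ^ p := by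
        gcongr with k hk
        exact_mod_cast Finset.mem_range.1 hk
    _ = (n : ℝ) ^ (p + 1) := by
        rw [Real.rpow_add_one' n.cast_nonneg (by linarith)]
        simp [mul_comm]

theorem le_sum_range_add_one_rpow (hp : 0 ≤ p) (n : ℕ) :
    (n : ℝ) ^ (p + 1) / (p + 1) ≤ ∑ k ∈ Finset.range n, ((k : ℝ) + 1) ^ p := by
  have hp1 : 0 < p + 1 := by linarith
  rw [div_le_iff₀' hp1, Finset.mul_sum]
  calc (n : ℝ) ^ (p + 1)
      = ∑ k ∈ Finset.range n, (((k + 1 : ℕ) : ℝ) ^ (p + 1) - (k : ℝ) ^ (p + 1)) := by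
        rw [Finset.sum_range_sub (fun k : ℕ => (k : ℝ) ^ (p + 1))]
        simp [hp1.ne']
    _ ≤ _ := by
        gcongr
        push_cast
        exact add_one_rpow_sub_rpow_le hp (Nat.cast_nonneg _)

theorem sum_range_add_one_rpow_le_of_nonpos (hp : -1 < p) (hp0 : p ≤ 0) (n : ℕ) :
    ∑ k ∈ Finset.range n, ((k : ℝ) + 1) ^ p ≤ (n : ℝ) ^ (p + 1) / (p + 1) := by
  have hp1 : 0 < p + 1 := by linarith
  rw [le_div_iff₀' hp1, Finset.mul_sum]
  calc ∑ k ∈ Finset.range n, (p + 1) * ((k : ℝ) + 1) ^ p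
      ≤ ∑ k ∈ Finset.range n, (((k + 1 : ℕ) : ℝ) ^ (p + 1) - (k : ℝ) ^ (p + 1)) := by
        gcongr
        push_cast
        exact le_add_one_rpow_sub_rpow hp.le hp0 (Nat.cast_nonneg _)
    _ = (n : ℝ) ^ (p + 1) := by
        rw [Finset.sum_range_sub (fun k : ℕ => (k : ℝ) ^ (p + 1))]
        simp [hp1.ne']

theorem le_sum_range_add_one_rpow_of_nonpos (hp : p ≠ -1) (hp0 : p ≤ 0) (n : ℕ) :
    (n : ℝ) ^ (p + 1) ≤ ∑ k ∈ Finset.range n, ((k : ℝ) + 1) ^ p := by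
  calc (n : ℝ) ^ (p + 1) = ∑ _k ∈ Finset.range n, (n : ℝ) ^ p := by
        rw [Real.rpow_add_one' n.cast_nonneg (fun h => hp (eq_neg_of_add_eq_zero_left h))]
        simp [mul_comm]
    _ ≤ _ := by
        refine Finset.sum_le_sum fun k hk => ?_
        have hk : (k : ℝ) + 1 ≤ n := by exact_mod_cast Finset.mem_range.1 hk
        exact Real.rpow_le_rpow_of_nonpos (by positivity) hk hp0

end SumRpow

theorem sum_range_le_sum_range_succ_erase {f : ℕ → ℝ} (hf : Monotone f) (hf0 : ∀ k, 0 ≤ f k)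
    (m n : ℕ) :
    ∑ k ∈ Finset.range m, f k ≤ ∑ k ∈ (Finset.range (m + 1)).erase n, f k := by
  have hsucc := Finset.sum_range_succ f m
  by_cases hn : n ∈ Finset.range (m + 1)
  · have herase := Finset.add_sum_erase _ f hn
    have hnm := hf (Finset.mem_range_succ_iff.1 hn)
    linarith
  · rw [Finset.erase_eq_of_notMem hn]
    linarith [hf0 m]

theorem sqrt_one_div_mul_rpow {a x : ℝ} (ha : 0 ≤ a) (hx : 0 ≤ x) (γ : ℝ) :
    Real.sqrt (1 / (a * x ^ γ)) = Real.sqrt (1 / a) * x ^ (-(γ / 2)) := by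
  rw [← div_div, Real.sqrt_div (by positivity), Real.rpow_neg hx, div_eq_mul_inv,
    Real.sqrt_eq_rpow (x ^ γ), ← Real.rpow_mul hx, mul_one_div]

namespace AntiTree

variable {s : ℕ → ℕ} {γ a b : ℝ}

theorem rpow_le_levelDeg (hγ : 0 ≤ γ) (ha : 0 ≤ a) (hsa : ∀ k : ℕ, a * ((k : ℝ) + 1) ^ γ ≤ s k)
    (k : ℕ) : a * ((k : ℝ) + 1) ^ γ ≤ levelDeg s k :=
  calc a * ((k : ℝ) + 1) ^ γ ≤ a * (((k + 1 : ℕ) : ℝ) + 1) ^ γ := by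
        gcongr
        exact k.le_succ
    _ ≤ s (k + 1) := hsa (k + 1)
    _ ≤ levelDeg s k := le_add_of_nonneg_left (by split_ifs <;> positivity)

theorem levelDeg_le_rpow (hγ : 0 ≤ γ) (hb : 0 ≤ b)
    (hsb : ∀ k : ℕ, (s k : ℝ) ≤ b * ((k : ℝ) + 1) ^ γ) (k : ℕ) :
    levelDeg s k ≤ 2 * b * ((k : ℝ) + 2) ^ γ := by
  have hprev : (if k = 0 then 0 else (s (k - 1) : ℝ)) ≤ b * ((k : ℝ) + 2) ^ γ := by
    split_ifs with h
    · positivity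
    · refine (hsb (k - 1)).trans ?_
      gcongr
      · exact k.sub_le 1
      · exact one_le_two
  have hnext : (s (k + 1) : ℝ) ≤ b * ((k : ℝ) + 2) ^ γ := by
    convert hsb (k + 1) using 3
    push_cast
    ring
  unfold levelDeg
  linarith

theorem edgeLength_le_rpow (hγ : 0 ≤ γ) (ha : 0 < a) (hsa : ∀ k : ℕ, a * ((k : ℝ) + 1) ^ γ ≤ s k)
    (k : ℕ) : edgeLength s k ≤ Real.sqrt (1 / a) * ((k : ℝ) + 1) ^ (-(γ / 2)) := by
  rw [← sqrt_one_div_mul_rpow ha.le (by positivity)]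
  exact Real.sqrt_le_sqrt ((min_le_left _ _).trans
    (one_div_le_one_div_of_le (by positivity) (rpow_le_levelDeg hγ ha.le hsa k)))

theorem rpow_le_edgeLength (hγ : 0 ≤ γ) (ha : 0 < a) (hb : 0 ≤ b)
    (hsa : ∀ k : ℕ, a * ((k : ℝ) + 1) ^ γ ≤ s k)
    (hsb : ∀ k : ℕ, (s k : ℝ) ≤ b * ((k : ℝ) + 1) ^ γ) (k : ℕ) :
    Real.sqrt (1 / (2 * b * 3 ^ γ)) * ((k : ℝ) + 1) ^ (-(γ / 2)) ≤ edgeLength s k := by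
  have hpos (j : ℕ) : 0 < levelDeg s j :=
    lt_of_lt_of_le (by positivity) (rpow_le_levelDeg hγ ha.le hsa j)
  have hle {j : ℕ} (hj : j ≤ k + 1) : levelDeg s j ≤ 2 * b * 3 ^ γ * ((k : ℝ) + 1) ^ γ := by
    have hj : (j : ℝ) ≤ k + 1 := by exact_mod_cast hj
    calc levelDeg s j ≤ 2 * b * ((j : ℝ) + 2) ^ γ := levelDeg_le_rpow hγ hb hsb j
      _ ≤ 2 * b * (3 * ((k : ℝ) + 1)) ^ γ := by
          gcongr
          linarith [k.cast_nonneg (α := ℝ)]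
      _ = 2 * b * 3 ^ γ * ((k : ℝ) + 1) ^ γ := by
          rw [Real.mul_rpow (by positivity) (by positivity), ← mul_assoc]
  rw [← sqrt_one_div_mul_rpow (by positivity) (by positivity)]
  exact Real.sqrt_le_sqrt (le_min (one_div_le_one_div_of_le (hpos k) (hle k.le_succ))
    (one_div_le_one_div_of_le (hpos (k + 1)) (hle le_rfl)))

theorem radius_le_rpow (hγ : 0 ≤ γ) (hγ2 : γ < 2) (ha : 0 < a)
    (hsa : ∀ k : ℕ, a * ((k : ℝ) + 1) ^ γ ≤ s k) (n : ℕ) :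
    radius s n ≤ Real.sqrt (1 / a) / (1 - γ / 2) * (n : ℝ) ^ (1 - γ / 2) := by
  have hsum := sum_range_add_one_rpow_le_of_nonpos (p := -(γ / 2)) (by linarith) (by linarith) n
  rw [neg_add_eq_sub] at hsum
  calc radius s n ≤ ∑ k ∈ Finset.range n, Real.sqrt (1 / a) * ((k : ℝ) + 1) ^ (-(γ / 2)) :=
        Finset.sum_le_sum fun k _ => edgeLength_le_rpow hγ ha hsa k
    _ ≤ Real.sqrt (1 / a) * ((n : ℝ) ^ (1 - γ / 2) / (1 - γ / 2)) := by
        rw [← Finset.mul_sum]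
        gcongr
    _ = _ := by ring

theorem rpow_le_radius (hγ : 0 ≤ γ) (hγ2 : γ ≠ 2) (ha : 0 < a) (hb : 0 ≤ b)
    (hsa : ∀ k : ℕ, a * ((k : ℝ) + 1) ^ γ ≤ s k)
    (hsb : ∀ k : ℕ, (s k : ℝ) ≤ b * ((k : ℝ) + 1) ^ γ) (n : ℕ) :
    Real.sqrt (1 / (2 * b * 3 ^ γ)) * (n : ℝ) ^ (1 - γ / 2) ≤ radius s n := by
  have hsum := le_sum_range_add_one_rpow_of_nonpos (p := -(γ / 2)) (by grind) (by linarith) n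
  rw [neg_add_eq_sub] at hsum
  calc _ ≤ Real.sqrt (1 / (2 * b * 3 ^ γ)) * ∑ k ∈ Finset.range n, ((k : ℝ) + 1) ^ (-(γ / 2)) := by
        gcongr
    _ ≤ radius s n := by
        rw [Finset.mul_sum]
        exact Finset.sum_le_sum fun k _ => rpow_le_edgeLength hγ ha hb hsa hsb k

theorem sum_range_le_rpow (hγ : 0 ≤ γ) (hb : 0 ≤ b)
    (hsb : ∀ k : ℕ, (s k : ℝ) ≤ b * ((k : ℝ) + 1) ^ γ) (n : ℕ) :
    ∑ k ∈ Finset.range n, (s k : ℝ) ≤ b * (n : ℝ) ^ (γ + 1) :=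
  calc ∑ k ∈ Finset.range n, (s k : ℝ) ≤ b * ∑ k ∈ Finset.range n, ((k : ℝ) + 1) ^ γ := by
        rw [Finset.mul_sum]
        exact Finset.sum_le_sum fun k _ => hsb k
    _ ≤ b * (n : ℝ) ^ (γ + 1) := by
        gcongr
        exact sum_range_add_one_rpow_le hγ n

theorem rpow_le_sum_range_succ_erase (hγ : 0 ≤ γ) (ha : 0 ≤ a)
    (hsa : ∀ k : ℕ, a * ((k : ℝ) + 1) ^ γ ≤ s k) (n m : ℕ) :
    a / (γ + 1) * (m : ℝ) ^ (γ + 1) ≤ ∑ k ∈ (Finset.range (m + 1)).erase n, (s k : ℝ) := by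
  have hmono : Monotone fun k : ℕ => ((k : ℝ) + 1) ^ γ := fun i j hij => by
    dsimp only
    gcongr
  calc a / (γ + 1) * (m : ℝ) ^ (γ + 1) = a * ((m : ℝ) ^ (γ + 1) / (γ + 1)) := by ring
    _ ≤ a * ∑ k ∈ (Finset.range (m + 1)).erase n, ((k : ℝ) + 1) ^ γ := by
        gcongr
        exact (le_sum_range_add_one_rpow hγ m).trans
          (sum_range_le_sum_range_succ_erase hmono (fun k => by positivity) m n)
    _ ≤ _ := by
        rw [Finset.mul_sum]
        exact Finset.sum_le_sum fun k _ => hsa k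

end AntiTree

theorem gammaSphere_le_rpow (γ : ℝ) (k : ℕ) : (gammaSphere γ k : ℝ) ≤ ((k : ℝ) + 1) ^ γ :=
  Nat.floor_le (by positivity)

theorem half_rpow_le_gammaSphere {γ : ℝ} (hγ : 0 ≤ γ) (k : ℕ) :
    1 / 2 * ((k : ℝ) + 1) ^ γ ≤ gammaSphere γ k := by
  have hlt : ((k : ℝ) + 1) ^ γ < gammaSphere γ k + 1 := Nat.lt_floor_add_one _
  have hpos : 0 < gammaSphere γ k :=
    Nat.floor_pos.2 (Real.one_le_rpow (by linarith [k.cast_nonneg (α := ℝ)]) hγ)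
  have hone : (1 : ℝ) ≤ gammaSphere γ k := by exact_mod_cast hpos
  linarith

theorem gammaAntiTree_volume_doubling_general {s : ℕ → ℕ} {γ a b : ℝ} (hγ0 : 0 ≤ γ) (hγ2 : γ < 2)
    (ha : 0 < a) (hsa : ∀ k : ℕ, a * ((k : ℝ) + 1) ^ γ ≤ s k)
    (hsb : ∀ k : ℕ, (s k : ℝ) ≤ b * ((k : ℝ) + 1) ^ γ) (o : AntiTree s) (ho : o.1 = 0) :
    ∃ C_D : ℝ, 0 < C_D ∧ ∀ x : AntiTree s, ∀ r₁ r₂ : ℝ,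
      max 1 (AntiTree.rho s x o) ≤ r₁ → r₁ ≤ r₂ →
      ((AntiTree.ball s x r₂).ncard : ℝ) ≤
        C_D * (r₂ / r₁) ^ (2 * (γ + 1) / (2 - γ)) * ((AntiTree.ball s x r₁).ncard : ℝ) := by
  have hs (k : ℕ) : 0 < s k :=
    Nat.cast_pos.1 (lt_of_lt_of_le (by positivity) (hsa k))
  have hb : 0 < b := ha.trans_le (by simpa using (hsa 0).trans (hsb 0))
  have hβ : 0 < 1 - γ / 2 := by linarith
  have hd : 2 * (γ + 1) / (2 - γ) = (γ + 1) / (1 - γ / 2) := by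
    have : 2 - γ ≠ 0 := by linarith
    field_simp
  obtain ⟨K, hK, hdoubling⟩ := AntiTree.exists_volume_doubling hs (by linarith) hβ
    (by positivity) (by positivity) (by positivity) hb
    (AntiTree.rpow_le_radius hγ0 hγ2.ne ha hb.le hsa hsb) (AntiTree.radius_le_rpow hγ0 hγ2 ha hsa)
    (AntiTree.rpow_le_sum_range_succ_erase hγ0 ha.le hsa)
    (AntiTree.sum_range_le_rpow hγ0 hb.le hsb)
  refine ⟨K, hK, fun x r₁ r₂ hr₁ hr₁₂ => ?_⟩
  obtain ⟨hone, hxo⟩ := max_le_iff.1 hr₁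
  rw [hd]
  exact hdoubling x r₁ r₂ hone ((AntiTree.radius_le_rho hs ho x).trans hxo) hr₁₂

/-- **Volume doubling for anti-trees.**
For `γ ∈ [0,2)`, `d := 2(γ+1)/(2-γ)`, and the `γ`-anti-tree with root `o`, counting
measure `m ≡ 1` and intrinsic degree path metric `ρ`, there is `C_D > 0` such that for all
vertices `x` and radii `max(1, ρ(x,o)) ≤ r₁ ≤ r₂`:
`#B_x(r₂) ≤ C_D (r₂/r₁)^d #B_x(r₁)`. -/
theorem gammaAntiTree_volume_doubling (γ : ℝ) (hγ0 : 0 ≤ γ) (hγ2 : γ < 2)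
    (o : AntiTree (gammaSphere γ)) (ho : o.1 = 0) :
    ∃ C_D : ℝ, 0 < C_D ∧ ∀ x : AntiTree (gammaSphere γ), ∀ r₁ r₂ : ℝ,
      max 1 (AntiTree.rho (gammaSphere γ) x o) ≤ r₁ → r₁ ≤ r₂ →
      ((AntiTree.ball (gammaSphere γ) x r₂).ncard : ℝ) ≤
        C_D * (r₂ / r₁) ^ (2 * (γ + 1) / (2 - γ)) *
          ((AntiTree.ball (gammaSphere γ) x r₁).ncard : ℝ) :=
  gammaAntiTree_volume_doubling_general hγ0 hγ2 one_half_pos (half_rpow_le_gammaSphere hγ0)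
    (fun k => (gammaSphere_le_rpow γ k).trans_eq (one_mul _).symm) o ho
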